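/- arXiv:1803.11073 — 12 statements merged into one kernel-verified Lean document; each statement's English description precedes it below -/
import Mathlib

section
/- (Furstenberg intersection lemma.) Let X be an infinite separable locally compact metric space and let f : X → X be a continuous weakly mixing map. Then for every n ≥ 1 and all nonempty open sets U₁, …, Uₙ, V₁, …, Vₙ ⊆ X there exist nonempty open sets Û, V̂ ⊆ X such that N(Û, V̂) is nonempty and N(Û, V̂) ⊆ N(U₁, V₁) ∩ N(U₂, V₂) ∩ … ∩ N(Uₙ, Vₙ). -/
/-- `NSet f U V` is the set `N(U,V) = {n ≥ 1 : fⁿ(U) ∩ V ≠ ∅}`. -/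
def NSet {X : Type*} (f : X → X) (U V : Set X) : Set ℕ :=
  {n : ℕ | 1 ≤ n ∧ (f^[n] '' U ∩ V).Nonempty}

/-- `f` is (topologically) weakly mixing. -/
def WeaklyMixing {X : Type*} [TopologicalSpace X] (f : X → X) : Prop :=
  ∀ U₁ U₂ V₁ V₂ : Set X, IsOpen U₁ → IsOpen U₂ → IsOpen V₁ → IsOpen V₂ →
    U₁.Nonempty → U₂.Nonempty → V₁.Nonempty → V₂.Nonempty →
    ∃ n : ℕ, 1 ≤ n ∧ (f^[n] '' U₁ ∩ V₁).Nonempty ∧ (f^[n] '' U₂ ∩ V₂).Nonempty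

/-- Furstenberg intersection lemma. -/
theorem furstenberg_intersection {X : Type*} [MetricSpace X] [Infinite X]
    [TopologicalSpace.SeparableSpace X] [LocallyCompactSpace X]
    (f : X → X) (hf : Continuous f) (hwm : WeaklyMixing f) :
    ∀ n : ℕ, 1 ≤ n → ∀ U V : Fin n → Set X,
      (∀ i, IsOpen (U i)) → (∀ i, IsOpen (V i)) →
      (∀ i, (U i).Nonempty) → (∀ i, (V i).Nonempty) →
      ∃ Uhat Vhat : Set X, IsOpen Uhat ∧ IsOpen Vhat ∧ Uhat.Nonempty ∧ Vhat.Nonempty ∧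
        (NSet f Uhat Vhat).Nonempty ∧ NSet f Uhat Vhat ⊆ ⋂ i, NSet f (U i) (V i) := by
  have key : ∀ n : ℕ, ∀ U V : Fin n → Set X,
      (∀ i, IsOpen (U i)) → (∀ i, IsOpen (V i)) →
      (∀ i, (U i).Nonempty) → (∀ i, (V i).Nonempty) →
      ∃ A B : Set X, IsOpen A ∧ IsOpen B ∧ A.Nonempty ∧ B.Nonempty ∧
        NSet f A B ⊆ ⋂ i, NSet f (U i) (V i) := by
    intro n
    induction n with
    | zero =>
      intro U V _ _ _ _
      exact ⟨Set.univ, Set.univ, isOpen_univ, isOpen_univ, Set.univ_nonempty,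
        Set.univ_nonempty, by simp⟩
    | succ k ih =>
      intro U V hU hV hUn hVn
      obtain ⟨A, B, hA, hB, hAn, hBn, hAB⟩ := ih (fun i => U i.succ) (fun i => V i.succ)
        (fun i => hU _) (fun i => hV _) (fun i => hUn _) (fun i => hVn _)
      obtain ⟨m, -, ⟨_, ⟨x, hx, rfl⟩, hx2⟩, ⟨_, ⟨y, hy, rfl⟩, hy2⟩⟩ :=
        hwm A B (U 0) (V 0) hA hB (hU 0) (hV 0) hAn hBn (hUn 0) (hVn 0)
      refine ⟨A ∩ f^[m] ⁻¹' U 0, B ∩ f^[m] ⁻¹' V 0,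
        hA.inter ((hU 0).preimage (hf.iterate m)), hB.inter ((hV 0).preimage (hf.iterate m)),
        ⟨x, hx, hx2⟩, ⟨y, hy, hy2⟩, ?_⟩
      rintro j ⟨hj, _, ⟨z, ⟨hzA, hzU⟩, rfl⟩, hzB, hzV⟩
      have h1 := hAB (show j ∈ NSet f A B from ⟨hj, _, ⟨z, hzA, rfl⟩, hzB⟩)
      rw [Set.mem_iInter] at h1 ⊢
      intro i
      refine Fin.cases ?_ (fun i => h1 i) i
      refine ⟨hj, f^[j] (f^[m] z), ⟨_, hzU, rfl⟩, ?_⟩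
      have hc : f^[j] (f^[m] z) = f^[m] (f^[j] z) := by
        rw [← Function.iterate_add_apply, ← Function.iterate_add_apply, add_comm]
      rw [hc]
      exact hzV
  intro n _ U V hU hV hUn hVn
  obtain ⟨A, B, hA, hB, hAn, hBn, hAB⟩ := key n U V hU hV hUn hVn
  obtain ⟨m, hm, h, -⟩ := hwm A A B B hA hA hB hB hAn hAn hBn hBn
  exact ⟨A, B, hA, hB, hAn, hBn, ⟨m, hm, h⟩, hAB⟩
end

section
/- Let X be an infinite separable locally compact metric space and let f : X → X be a continuous weakly mixing map. Then for every n ≥ 1 the n-fold product map f × f × … × f : Xⁿ → Xⁿ, (x₁, …, xₙ) ↦ (f(x₁), …, f(xₙ)), is topologically transitive: for any nonempty open sets W₁, W₂ ⊆ Xⁿ there exists k ≥ 1 with (f × … × f)ᵏ(W₁) ∩ W₂ ≠ ∅. -/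
/-- The `n`-fold product map `f × f × ⋯ × f` on `Xⁿ`. -/
def prodMap {X : Type*} (n : ℕ) (f : X → X) : (Fin n → X) → (Fin n → X) :=
  fun x i => f (x i)

theorem furstenberg_aux {X : Type*} [TopologicalSpace X] [Nonempty X]
    (f : X → X) (hf : Continuous f) (hwm : WeaklyMixing f) :
    ∀ n : ℕ, ∀ U V : Fin n → Set X, (∀ i, IsOpen (U i)) → (∀ i, IsOpen (V i)) →
      (∀ i, (U i).Nonempty) → (∀ i, (V i).Nonempty) →
      ∃ A B : Set X, IsOpen A ∧ IsOpen B ∧ A.Nonempty ∧ B.Nonempty ∧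
        ∀ k : ℕ, (∃ x ∈ A, f^[k] x ∈ B) → ∀ i, ∃ x ∈ U i, f^[k] x ∈ V i := by
  intro n
  induction n with
  | zero =>
    intro U V _ _ _ _
    exact ⟨Set.univ, Set.univ, isOpen_univ, isOpen_univ, Set.univ_nonempty, Set.univ_nonempty,
      fun k _ i => i.elim0⟩
  | succ n ih =>
    intro U V hU hV hUn hVn
    obtain ⟨A, B, hA, hB, hAn, hBn, h⟩ := ih (fun i => U i.succ) (fun i => V i.succ)
      (fun i => hU _) (fun i => hV _) (fun i => hUn _) (fun i => hVn _)
    obtain ⟨m, -, ⟨_, ⟨x, hx, rfl⟩, hx'⟩, ⟨_, ⟨y, hy, rfl⟩, hy'⟩⟩ :=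
      hwm A B (U 0) (V 0) hA hB (hU 0) (hV 0) hAn hBn (hUn 0) (hVn 0)
    refine ⟨A ∩ f^[m] ⁻¹' U 0, B ∩ f^[m] ⁻¹' V 0, hA.inter ((hU 0).preimage (hf.iterate m)),
      hB.inter ((hV 0).preimage (hf.iterate m)), ⟨x, hx, hx'⟩, ⟨y, hy, hy'⟩, ?_⟩
    rintro k ⟨z, ⟨hz1, hz2⟩, hz3, hz4⟩ i
    refine Fin.cases ?_ (fun i => h k ⟨z, hz1, hz3⟩ i) i
    refine ⟨f^[m] z, hz2, ?_⟩
    rw [← Function.iterate_add_apply, add_comm k m, Function.iterate_add_apply]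
    exact hz4

theorem prodMap_iterate_aux {X : Type*} (n : ℕ) (f : X → X) (k : ℕ) (x : Fin n → X) :
    (prodMap n f)^[k] x = fun i => f^[k] (x i) := by
  induction k with
  | zero => rfl
  | succ k ih =>
    rw [Function.iterate_succ_apply', ih]
    funext i
    rw [Function.iterate_succ_apply']
    rfl

theorem prod_transitive_of_weaklyMixing {X : Type*} [MetricSpace X] [Infinite X]
    [TopologicalSpace.SeparableSpace X] [LocallyCompactSpace X]
    (f : X → X) (hf : Continuous f) (hwm : WeaklyMixing f) :
    ∀ n : ℕ, 1 ≤ n → ∀ W₁ W₂ : Set (Fin n → X), IsOpen W₁ → IsOpen W₂ →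
      W₁.Nonempty → W₂.Nonempty →
      ∃ k : ℕ, 1 ≤ k ∧ ((prodMap n f)^[k] '' W₁ ∩ W₂).Nonempty := by
  rintro n - W₁ W₂ hW₁ hW₂ ⟨a, ha⟩ ⟨b, hb⟩
  obtain ⟨U, hU, hUW⟩ := isOpen_pi_iff'.1 hW₁ a ha
  obtain ⟨V, hV, hVW⟩ := isOpen_pi_iff'.1 hW₂ b hb
  obtain ⟨A, B, hA, hB, hAn, hBn, h⟩ := furstenberg_aux f hf hwm n U V
    (fun i => (hU i).1) (fun i => (hV i).1) (fun i => ⟨_, (hU i).2⟩) (fun i => ⟨_, (hV i).2⟩)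
  obtain ⟨k, hk, ⟨_, ⟨x, hx, rfl⟩, hx'⟩, -⟩ := hwm A A B B hA hA hB hB hAn hAn hBn hBn
  choose z hz hz' using h k ⟨x, hx, hx'⟩
  refine ⟨k, hk, _, ⟨z, hUW fun i _ => hz i, rfl⟩, hVW fun i _ => ?_⟩
  rw [prodMap_iterate_aux]
  exact hz' i
end

section
/- Let X be an infinite separable locally compact metric space and let f : X → X be a continuous map. Then f is weakly mixing if and only if for all nonempty open sets U, V ⊆ X the set N(U, V) contains arbitrarily long strings of consecutive positive integers, i.e., for every L ≥ 1 there exists m ≥ 1 such that m, m+1, …, m+L−1 all belong to N(U, V). -/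
theorem mem_NSet_iff' {X : Type*} (f : X → X) (U V : Set X) (n : ℕ) :
    n ∈ NSet f U V ↔ 1 ≤ n ∧ ∃ x ∈ U, f^[n] x ∈ V := by
  constructor
  · rintro ⟨h, y, ⟨x, hx, rfl⟩, hy⟩
    exact ⟨h, x, hx, hy⟩
  · rintro ⟨h, x, hx, hy⟩
    exact ⟨h, f^[n] x, ⟨x, hx, rfl⟩, hy⟩

theorem NSet_inter {X : Type*} [TopologicalSpace X] {f : X → X} (hf : Continuous f)
    (h : WeaklyMixing f) (U₁ U₂ V₁ V₂ : Set X) (hU₁ : IsOpen U₁) (hU₂ : IsOpen U₂)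
    (hV₁ : IsOpen V₁) (hV₂ : IsOpen V₂) (nU₁ : U₁.Nonempty) (nU₂ : U₂.Nonempty)
    (nV₁ : V₁.Nonempty) (nV₂ : V₂.Nonempty) :
    ∃ U V : Set X, IsOpen U ∧ IsOpen V ∧ U.Nonempty ∧ V.Nonempty ∧
      ∀ k ∈ NSet f U V, k ∈ NSet f U₁ V₁ ∧ k ∈ NSet f U₂ V₂ := by
  obtain ⟨n, hn, ⟨_, ⟨x, hx, rfl⟩, hx'⟩, ⟨_, ⟨y, hy, rfl⟩, hy'⟩⟩ :=
    h U₁ V₁ U₂ V₂ hU₁ hV₁ hU₂ hV₂ nU₁ nV₁ nU₂ nV₂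
  refine ⟨U₁ ∩ f^[n] ⁻¹' U₂, V₁ ∩ f^[n] ⁻¹' V₂, hU₁.inter (hU₂.preimage (hf.iterate n)),
    hV₁.inter (hV₂.preimage (hf.iterate n)), ⟨x, hx, hx'⟩, ⟨y, hy, hy'⟩, ?_⟩
  intro k hk
  simp only [mem_NSet_iff'] at hk ⊢
  obtain ⟨h1, z, ⟨hz1, hz2⟩, hz3, hz4⟩ := hk
  refine ⟨⟨h1, z, hz1, hz3⟩, h1, f^[n] z, hz2, ?_⟩
  have e : f^[k] (f^[n] z) = f^[n] (f^[k] z) := by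
    rw [← Function.iterate_add_apply, ← Function.iterate_add_apply, Nat.add_comm]
  rw [e]
  exact hz4

theorem preimage_nonempty' {X : Type*} [TopologicalSpace X] {f : X → X} (hf : Continuous f)
    (h : WeaklyMixing f) (V : Set X) (hV : IsOpen V) (nV : V.Nonempty) (i : ℕ) :
    (f^[i] ⁻¹' V).Nonempty := by
  induction i with
  | zero => simpa using nV
  | succ i ih =>
    have ho := hV.preimage (hf.iterate i)
    obtain ⟨n, hn, ⟨_, ⟨x, hx, rfl⟩, hx'⟩, -⟩ := h V V _ _ hV hV ho ho nV nV ih ih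
    obtain ⟨m, rfl⟩ : ∃ m, n = m + 1 := ⟨n - 1, by omega⟩
    refine ⟨f^[m] x, ?_⟩
    simp only [Set.mem_preimage] at hx' ⊢
    rw [Function.iterate_succ_apply, ← Function.iterate_succ_apply' f m]
    exact hx'

theorem strings_aux {X : Type*} [TopologicalSpace X] {f : X → X} (hf : Continuous f)
    (h : WeaklyMixing f) (U V : Set X) (hU : IsOpen U) (hV : IsOpen V)
    (nU : U.Nonempty) (nV : V.Nonempty) (L : ℕ) :
    ∃ U' V' : Set X, IsOpen U' ∧ IsOpen V' ∧ U'.Nonempty ∧ V'.Nonempty ∧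
      ∀ k ∈ NSet f U' V', ∀ i < L, k + i ∈ NSet f U V := by
  induction L with
  | zero => exact ⟨U, V, hU, hV, nU, nV, fun k _ i hi => absurd hi (Nat.not_lt_zero i)⟩
  | succ L ih =>
    obtain ⟨U', V', oU', oV', nU', nV', H⟩ := ih
    obtain ⟨A, B, oA, oB, nA, nB, K⟩ := NSet_inter hf h U' U V' (f^[L] ⁻¹' V) oU' hU oV'
      (hV.preimage (hf.iterate L)) nU' nU nV' (preimage_nonempty' hf h V hV nV L)
    refine ⟨A, B, oA, oB, nA, nB, fun k hk i hi => ?_⟩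
    obtain ⟨k1, k2⟩ := K k hk
    rcases Nat.lt_succ_iff_lt_or_eq.mp hi with hi | rfl
    · exact H k k1 i hi
    · rw [mem_NSet_iff'] at k2 ⊢
      obtain ⟨h1, x, hx, hx'⟩ := k2
      refine ⟨by omega, x, hx, ?_⟩
      rw [Nat.add_comm, Function.iterate_add_apply]
      exact hx'

theorem weaklyMixing_iff_arbitrarily_long_strings {X : Type*} [MetricSpace X] [Infinite X]
    [TopologicalSpace.SeparableSpace X] [LocallyCompactSpace X]
    (f : X → X) (hf : Continuous f) :
    WeaklyMixing f ↔
      ∀ U V : Set X, IsOpen U → IsOpen V → U.Nonempty → V.Nonempty →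
        ∀ L : ℕ, 1 ≤ L → ∃ m : ℕ, 1 ≤ m ∧ ∀ i < L, (m + i) ∈ NSet f U V := by
  constructor
  · intro h U V hU hV nU nV L _
    obtain ⟨A, B, oA, oB, nA, nB, K⟩ := strings_aux hf h U V hU hV nU nV L
    obtain ⟨n, hn, hne, -⟩ := h A A B B oA oA oB oB nA nA nB nB
    exact ⟨n, hn, fun i hi => K n ⟨hn, hne⟩ i hi⟩
  · intro h U₁ U₂ V₁ V₂ hU₁ hU₂ hV₁ hV₂ nU₁ nU₂ nV₁ nV₂
    obtain ⟨n, -, hn⟩ := h U₁ U₂ hU₁ hU₂ nU₁ nU₂ 1 le_rfl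
    obtain ⟨m, -, hm⟩ := h V₁ V₂ hV₁ hV₂ nV₁ nV₂ 1 le_rfl
    obtain ⟨-, x, hx, hx'⟩ := (mem_NSet_iff' _ _ _ _).1 (hn 0 one_pos)
    obtain ⟨-, y, hy, hy'⟩ := (mem_NSet_iff' _ _ _ _).1 (hm 0 one_pos)
    rw [Nat.add_zero] at hx' hy'
    obtain ⟨a, ha, H⟩ := h (U₁ ∩ f^[n] ⁻¹' U₂) (V₁ ∩ f^[m] ⁻¹' V₂)
      (hU₁.inter (hU₂.preimage (hf.iterate n))) (hV₁.inter (hV₂.preimage (hf.iterate m)))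
      ⟨x, hx, hx'⟩ ⟨y, hy, hy'⟩ (n + m + 1) (by omega)
    obtain ⟨-, z, ⟨hz1, -⟩, hz3, -⟩ := (mem_NSet_iff' _ _ _ _).1 (H m (by omega))
    obtain ⟨-, w, ⟨-, hw2⟩, -, hw4⟩ := (mem_NSet_iff' _ _ _ _).1 (H n (by omega))
    refine ⟨a + m, by omega, ⟨_, ⟨z, hz1, rfl⟩, hz3⟩, ⟨_, ⟨f^[n] w, hw2, rfl⟩, ?_⟩⟩
    have e : f^[a + m] (f^[n] w) = f^[m] (f^[a + n] w) := by
      rw [← Function.iterate_add_apply, ← Function.iterate_add_apply,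
        show a + m + n = m + (a + n) by omega]
    rw [e]
    exact hw4
end

section
/- Let X be an infinite separable locally compact metric space and let f : X → X be a continuous map. Then f is weakly mixing if and only if for all nonempty open sets U, V ⊆ X the set N(U, V) contains two consecutive positive integers, i.e., there exists n ≥ 1 with n ∈ N(U, V) and n+1 ∈ N(U, V). -/
/-- If `N(U,V)` always has two consecutive elements, it has arbitrarily long blocks. -/
theorem thick_of_two {X : Type*} [TopologicalSpace X] (f : X → X) (hf : Continuous f)
    (H : ∀ U V : Set X, IsOpen U → IsOpen V → U.Nonempty → V.Nonempty →
        ∃ n : ℕ, 1 ≤ n ∧ (∃ x ∈ U, f^[n] x ∈ V) ∧ (∃ x ∈ U, f^[n+1] x ∈ V)) (m : ℕ) :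
    ∀ U V : Set X, IsOpen U → IsOpen V → U.Nonempty → V.Nonempty →
        ∃ n : ℕ, 1 ≤ n ∧ ∀ i ≤ m, ∃ x ∈ U, f^[n+i] x ∈ V := by
  induction m with
  | zero =>
    intro U V hU hV nU nV
    obtain ⟨n, hn, h1, -⟩ := H U V hU hV nU nV
    refine ⟨n, hn, fun i hi => ?_⟩
    obtain rfl : i = 0 := by omega
    exact h1
  | succ m ih =>
    -- first the diagonal case
    have diag : ∀ U : Set X, IsOpen U → U.Nonempty →
        ∃ n : ℕ, 1 ≤ n ∧ ∀ i ≤ m + 1, ∃ x ∈ U, f^[n+i] x ∈ U := by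
      intro U hU nU
      obtain ⟨a, ha, ⟨x, hx, hxa⟩, ⟨y, hy, hya⟩⟩ := H U U hU hU nU nU
      obtain ⟨k, hk, hki⟩ := ih (U ∩ f^[a] ⁻¹' U) (U ∩ f^[a+1] ⁻¹' U)
        (hU.inter (hU.preimage (hf.iterate a))) (hU.inter (hU.preimage (hf.iterate (a+1))))
        ⟨x, hx, hxa⟩ ⟨y, hy, hya⟩
      refine ⟨k, hk, fun i hi => ?_⟩
      by_cases him : i ≤ m
      · obtain ⟨z, hz, hz'⟩ := hki i him
        exact ⟨z, hz.1, hz'.1⟩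
      · obtain rfl : i = m + 1 := by omega
        obtain ⟨z, hz, hz'⟩ := hki m le_rfl
        refine ⟨f^[a] z, hz.2, ?_⟩
        have h2 : f^[a+1] (f^[k+m] z) ∈ U := hz'.2
        rw [← Function.iterate_add_apply] at h2 ⊢
        rwa [show k + (m + 1) + a = a + 1 + (k + m) by omega]
    intro U V hU hV nU nV
    obtain ⟨c, hc, ⟨x, hx, hxc⟩, -⟩ := H U V hU hV nU nV
    obtain ⟨n, hn, hni⟩ := diag (U ∩ f^[c] ⁻¹' V) (hU.inter (hV.preimage (hf.iterate c)))
      ⟨x, hx, hxc⟩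
    refine ⟨c + n, by omega, fun i hi => ?_⟩
    obtain ⟨z, hz, hz'⟩ := hni i hi
    refine ⟨z, hz.1, ?_⟩
    have h2 : f^[c] (f^[n+i] z) ∈ V := hz'.2
    rw [← Function.iterate_add_apply] at h2
    rwa [show c + n + i = c + (n + i) by omega]

theorem weaklyMixing_iff_two_consecutive {X : Type*} [MetricSpace X] [Infinite X]
    [TopologicalSpace.SeparableSpace X] [LocallyCompactSpace X]
    (f : X → X) (hf : Continuous f) :
    WeaklyMixing f ↔
      ∀ U V : Set X, IsOpen U → IsOpen V → U.Nonempty → V.Nonempty →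
        ∃ n : ℕ, 1 ≤ n ∧ n ∈ NSet f U V ∧ n + 1 ∈ NSet f U V := by
  constructor
  · intro hw U V hU hV nU nV
    have hne : (f ⁻¹' V).Nonempty := by
      obtain ⟨n, hn, ⟨_, ⟨x, hx, rfl⟩, hv⟩, -⟩ := hw U U V V hU hU hV hV nU nU nV nV
      obtain ⟨k, rfl⟩ : ∃ k, n = k + 1 := ⟨n - 1, by omega⟩
      rw [Function.iterate_succ_apply'] at hv
      exact ⟨_, hv⟩
    obtain ⟨n, hn, h1, ⟨_, ⟨x, hx, rfl⟩, hv⟩⟩ :=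
      hw U U V (f ⁻¹' V) hU hU hV (hV.preimage hf) nU nU nV hne
    refine ⟨n, hn, ⟨hn, h1⟩, (mem_NSet_iff' _ _ _ _).2 ⟨by omega, x, hx, ?_⟩⟩
    rw [Function.iterate_succ_apply']
    exact hv
  · intro H U₁ U₂ V₁ V₂ hU₁ hU₂ hV₁ hV₂ nU₁ nU₂ nV₁ nV₂
    have H' : ∀ U V : Set X, IsOpen U → IsOpen V → U.Nonempty → V.Nonempty →
        ∃ n : ℕ, 1 ≤ n ∧ (∃ x ∈ U, f^[n] x ∈ V) ∧ (∃ x ∈ U, f^[n+1] x ∈ V) := by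
      intro U V hU hV nU nV
      obtain ⟨n, hn, h1, h2⟩ := H U V hU hV nU nV
      exact ⟨n, hn, ((mem_NSet_iff' _ _ _ _).1 h1).2, ((mem_NSet_iff' _ _ _ _).1 h2).2⟩
    obtain ⟨c, hc, ⟨x, hx, hxc⟩, -⟩ := H' U₁ U₂ hU₁ hU₂ nU₁ nU₂
    obtain ⟨d, hd, ⟨y, hy, hyd⟩, -⟩ := H' V₁ V₂ hV₁ hV₂ nV₁ nV₂
    obtain ⟨k, hk, hki⟩ := thick_of_two f hf H' (c + d) (U₁ ∩ f^[c] ⁻¹' U₂) (V₁ ∩ f^[d] ⁻¹' V₂)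
      (hU₁.inter (hU₂.preimage (hf.iterate c))) (hV₁.inter (hV₂.preimage (hf.iterate d)))
      ⟨x, hx, hxc⟩ ⟨y, hy, hyd⟩
    obtain ⟨z, hz, hz'⟩ := hki d (by omega)
    obtain ⟨w, hw, hw'⟩ := hki c (by omega)
    refine ⟨k + d, by omega, ⟨_, ⟨z, hz.1, rfl⟩, hz'.1⟩, ⟨_, ⟨f^[c] w, hw.2, rfl⟩, ?_⟩⟩
    have h2 : f^[d] (f^[k+c] w) ∈ V₂ := hw'.2
    rw [← Function.iterate_add_apply] at h2 ⊢
    rwa [show k + d + c = d + (k + c) by omega]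
end

section
/- Let X be an infinite separable locally compact metric space and let f : X → X be a continuous map. Suppose f is topologically transitive and for every nonempty open set U ⊆ X the set N(U, U) contains two consecutive positive integers. Then for every pair of nonempty open sets U, V ⊆ X the set N(U, V) contains two consecutive positive integers. -/
/-- `f` is (topologically) transitive. -/
def TopTransitive {X : Type*} [TopologicalSpace X] (f : X → X) : Prop :=
  ∀ U V : Set X, IsOpen U → IsOpen V → U.Nonempty → V.Nonempty → (NSet f U V).Nonempty

theorem consecutive_NUV_of_transitive {X : Type*} [MetricSpace X] [Infinite X]
    [TopologicalSpace.SeparableSpace X] [LocallyCompactSpace X]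
    (f : X → X) (hf : Continuous f) (htrans : TopTransitive f)
    (hcons : ∀ U : Set X, IsOpen U → U.Nonempty →
      ∃ n : ℕ, 1 ≤ n ∧ n ∈ NSet f U U ∧ n + 1 ∈ NSet f U U) :
    ∀ U V : Set X, IsOpen U → IsOpen V → U.Nonempty → V.Nonempty →
      ∃ n : ℕ, 1 ≤ n ∧ n ∈ NSet f U V ∧ n + 1 ∈ NSet f U V := by
  intro U V hU hV hUn hVn
  obtain ⟨k, hk, y, ⟨x, hxU, rfl⟩, hxV⟩ := htrans U V hU hV hUn hVn
  have hW : IsOpen (U ∩ f^[k] ⁻¹' V) := hU.inter (hV.preimage (hf.iterate k))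
  obtain ⟨n, hn, h1, h2⟩ := hcons _ hW ⟨x, hxU, hxV⟩
  have key : ∀ m, m ∈ NSet f (U ∩ f^[k] ⁻¹' V) (U ∩ f^[k] ⁻¹' V) → k + m ∈ NSet f U V := by
    rintro m ⟨hm, _, ⟨z, hz, rfl⟩, hz2⟩
    refine ⟨by omega, f^[k + m] z, ⟨z, hz.1, rfl⟩, ?_⟩
    rw [Function.iterate_add_apply]
    exact hz2.2
  exact ⟨k + n, by omega, key n h1, key (n + 1) h2⟩
end

section
/- Let X be an infinite separable locally compact metric space and let f : X → X be a continuous map. Suppose that for every pair of nonempty open sets U, V ⊆ X the set N(U, V) contains two consecutive positive integers. Then f is topologically transitive and for every nonempty open set U ⊆ X the set N(U, U) contains arbitrarily long strings of consecutive positive integers: for every L ≥ 1 there exists m ≥ 1 such that m, m+1, …, m+L−1 all belong to N(U, U). -/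
/-- The finite set `S` of times is realised by an orbit visiting `U`. -/
def HitsAt {X : Type*} (f : X → X) (U : Set X) (S : Finset ℕ) : Prop :=
  ∃ x, ∀ a ∈ S, f^[a] x ∈ U

/-- `A` together with `B` translated by `n`. -/
def joinShift (A B : Finset ℕ) (n : ℕ) : Finset ℕ := A ∪ B.image (fun b => n + b)

theorem hitsAt_join {X : Type*} [TopologicalSpace X] (f : X → X) (hf : Continuous f)
    (hcons : ∀ U V : Set X, IsOpen U → IsOpen V → U.Nonempty → V.Nonempty →
      ∃ n : ℕ, 1 ≤ n ∧ n ∈ NSet f U V ∧ n + 1 ∈ NSet f U V)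
    (U : Set X) (hU : IsOpen U) (A B : Finset ℕ) (hA : HitsAt f U A) (hB : HitsAt f U B) :
    ∃ n : ℕ, 1 ≤ n ∧ HitsAt f U (joinShift A B n) ∧ HitsAt f U (joinShift A B (n + 1)) := by
  have hop : ∀ S : Finset ℕ, IsOpen {x | ∀ a ∈ S, f^[a] x ∈ U} := by
    intro S
    have : {x | ∀ a ∈ S, f^[a] x ∈ U} = ⋂ a ∈ S, f^[a] ⁻¹' U := by
      ext x; simp
    rw [this]
    exact isOpen_biInter_finset fun a _ => hU.preimage (hf.iterate a)
  have key : ∀ n, n ∈ NSet f {x | ∀ a ∈ A, f^[a] x ∈ U} {x | ∀ a ∈ B, f^[a] x ∈ U} →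
      HitsAt f U (joinShift A B n) := by
    rintro n ⟨_, y, ⟨x, hx, rfl⟩, hy⟩
    refine ⟨x, fun a ha => ?_⟩
    simp only [joinShift, Finset.mem_union, Finset.mem_image] at ha
    rcases ha with ha | ⟨b, hb, rfl⟩
    · exact hx a ha
    · rw [Nat.add_comm, Function.iterate_add_apply]
      exact hy b hb
  obtain ⟨n, h1, h2, h3⟩ := hcons _ _ (hop A) (hop B) hA hB
  exact ⟨n, h1, key _ h2, key _ h3⟩

theorem exists_long_differences {X : Type*} [TopologicalSpace X] (f : X → X) (hf : Continuous f)
    (hcons : ∀ U V : Set X, IsOpen U → IsOpen V → U.Nonempty → V.Nonempty →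
      ∃ n : ℕ, 1 ≤ n ∧ n ∈ NSet f U V ∧ n + 1 ∈ NSet f U V)
    (U : Set X) (hU : IsOpen U) (hne : U.Nonempty) (k : ℕ) :
    ∃ (s : ℕ) (A B : Finset ℕ), HitsAt f U A ∧ HitsAt f U B ∧
      ∀ i ≤ k, ∃ a ∈ A, ∃ b ∈ B, b = a + s + i := by
  induction k with
  | zero =>
    obtain ⟨x, hx⟩ := hne
    have h : HitsAt f U {0} := ⟨x, by simpa using hx⟩
    exact ⟨0, {0}, {0}, h, h, by simp⟩
  | succ k ih =>
    obtain ⟨s, A, B, hA, hB, h⟩ := ih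
    obtain ⟨n, -, hC, -⟩ := hitsAt_join f hf hcons U hU A B hA hB
    obtain ⟨p, -, hA', hB'⟩ := hitsAt_join f hf hcons U hU _ _ hC hC
    refine ⟨n + s, _, _, hA', hB', fun i hi => ?_⟩
    have hAC : ∀ a ∈ A, a ∈ joinShift A B n := fun a ha => Finset.mem_union_left _ ha
    have hBC : ∀ b ∈ B, n + b ∈ joinShift A B n := fun b hb =>
      Finset.mem_union_right _ (Finset.mem_image_of_mem _ hb)
    rcases Nat.lt_or_ge k i with hik | hik
    · obtain ⟨a, ha, b, hb, hab⟩ := h k le_rfl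
      refine ⟨p + a, Finset.mem_union_right _ (Finset.mem_image_of_mem _ (hAC a ha)),
        p + 1 + (n + b), Finset.mem_union_right _ (Finset.mem_image_of_mem _ (hBC b hb)), ?_⟩
      omega
    · obtain ⟨a, ha, b, hb, hab⟩ := h i hik
      exact ⟨a, Finset.mem_union_left _ (hAC a ha), n + b,
        Finset.mem_union_left _ (hBC b hb), by omega⟩

theorem transitive_and_long_strings_of_consecutive {X : Type*} [MetricSpace X] [Infinite X]
    [TopologicalSpace.SeparableSpace X] [LocallyCompactSpace X]
    (f : X → X) (hf : Continuous f)
    (hcons : ∀ U V : Set X, IsOpen U → IsOpen V → U.Nonempty → V.Nonempty →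
      ∃ n : ℕ, 1 ≤ n ∧ n ∈ NSet f U V ∧ n + 1 ∈ NSet f U V) :
    TopTransitive f ∧
      ∀ U : Set X, IsOpen U → U.Nonempty → ∀ L : ℕ, 1 ≤ L →
        ∃ m : ℕ, 1 ≤ m ∧ ∀ i < L, (m + i) ∈ NSet f U U := by
  refine ⟨fun U V hU hV hUn hVn => ?_, fun U hU hUn L _ => ?_⟩
  · obtain ⟨n, -, hn, -⟩ := hcons U V hU hV hUn hVn
    exact ⟨n, hn⟩
  · obtain ⟨s, A, B, hA, hB, h⟩ := exists_long_differences f hf hcons U hU hUn L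
    obtain ⟨n, hn, ⟨x, hx⟩, -⟩ := hitsAt_join f hf hcons U hU A B hA hB
    refine ⟨n + s, by omega, fun i hi => ⟨by omega, ?_⟩⟩
    obtain ⟨a, ha, b, hb, hab⟩ := h i hi.le
    refine ⟨f^[n + b] x, ⟨f^[a] x, hx a (Finset.mem_union_left _ ha), ?_⟩,
      hx _ (Finset.mem_union_right _ (Finset.mem_image_of_mem _ hb))⟩
    rw [← Function.iterate_add_apply, show n + s + i + a = n + b by omega]
end

section
/- Let X be an infinite separable locally compact metric space and let f : X → X be a continuous map. Suppose f is topologically transitive and for every nonempty open set U ⊆ X and every L ≥ 1 the set N(U, U) contains L consecutive positive integers. Then f is weakly mixing. -/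
theorem weaklyMixing_of_transitive_long_strings {X : Type*} [MetricSpace X] [Infinite X]
    [TopologicalSpace.SeparableSpace X] [LocallyCompactSpace X]
    (f : X → X) (hf : Continuous f) (htrans : TopTransitive f)
    (hlong : ∀ U : Set X, IsOpen U → U.Nonempty → ∀ L : ℕ, 1 ≤ L →
      ∃ m : ℕ, 1 ≤ m ∧ ∀ i < L, (m + i) ∈ NSet f U U) :
    WeaklyMixing f := by
  intro U₁ U₂ V₁ V₂ hU₁ hU₂ hV₁ hV₂ nU₁ nU₂ nV₁ nV₂
  obtain ⟨a, -, y, ⟨u, hu, rfl⟩, huy⟩ := htrans U₁ U₂ hU₁ hU₂ nU₁ nU₂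
  obtain ⟨b, -, y, ⟨v, hv, rfl⟩, hvy⟩ := htrans V₁ V₂ hV₁ hV₂ nV₁ nV₂
  have hU : IsOpen (U₁ ∩ f^[a] ⁻¹' U₂) := hU₁.inter (hU₂.preimage (hf.iterate a))
  have hV : IsOpen (V₁ ∩ f^[b] ⁻¹' V₂) := hV₁.inter (hV₂.preimage (hf.iterate b))
  obtain ⟨c, -, y, ⟨w, hw, rfl⟩, hwy⟩ := htrans _ _ hU hV ⟨u, hu, huy⟩ ⟨v, hv, hvy⟩
  obtain ⟨m, hm, H⟩ := hlong ((U₁ ∩ f^[a] ⁻¹' U₂) ∩ f^[c] ⁻¹' (V₁ ∩ f^[b] ⁻¹' V₂))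
    (hU.inter (hV.preimage (hf.iterate c))) ⟨w, hw, hwy⟩ (a + b + 1) (by omega)
  obtain ⟨-, y, ⟨p, hp, rfl⟩, hpy⟩ := H b (by omega)
  obtain ⟨-, y, ⟨q, hq, rfl⟩, hqy⟩ := H a (by omega)
  refine ⟨m + b + c, by omega, ⟨_, ⟨p, hp.1.1, rfl⟩, ?_⟩, ⟨_, ⟨f^[a] q, hq.1.2, rfl⟩, ?_⟩⟩
  · have h := hpy.2.1
    rw [← Function.iterate_add_apply] at h
    rwa [show m + b + c = c + (m + b) by omega]
  · have h := hqy.2.2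
    rw [Set.mem_preimage, ← Function.iterate_add_apply, ← Function.iterate_add_apply] at h
    rw [← Function.iterate_add_apply]
    rwa [show m + b + c + a = b + c + (m + a) by omega]
end

section
/- Let X be an infinite separable locally compact metric space and let f : X → X be a continuous weakly mixing map. Let n ≥ 1, let K₁, …, Kₙ ⊆ X be compact sets with nonempty interiors, and let V₁, …, Vₙ ⊆ X be nonempty open sets. Then for every L ≥ 1 there exist L consecutive positive integers m+1, m+2, …, m+L such that for each k in {m+1, …, m+L} and each 1 ≤ j ≤ n there is a compact set K_{k,j} ⊆ K_j with nonempty interior satisfying fᵏ(K_{k,j}) ⊆ V_j. -/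
theorem wm_preimage_nonempty {X : Type*} [TopologicalSpace X] {f : X → X}
    (hf : Continuous f) (hwm : WeaklyMixing f) (i : ℕ) :
    ∀ V : Set X, IsOpen V → V.Nonempty → (f^[i] ⁻¹' V).Nonempty := by
  induction i with
  | zero => intro V _ h; simpa using h
  | succ i ih =>
    intro V hV hne
    obtain ⟨n, hn, ⟨y, ⟨x, _, rfl⟩, hy⟩, _⟩ := hwm V V V V hV hV hV hV hne hne hne hne
    obtain ⟨k, rfl⟩ : ∃ k, n = k + 1 := ⟨n - 1, by omega⟩
    have h1 : (f ⁻¹' V).Nonempty := ⟨f^[k] x, by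
      rw [Function.iterate_succ_apply'] at hy; exact hy⟩
    obtain ⟨z, hz⟩ := ih (f ⁻¹' V) (hV.preimage hf) h1
    exact ⟨z, by
      simp only [Set.mem_preimage, Function.iterate_succ_apply'] at hz ⊢
      exact hz⟩

theorem wm_family {X ι : Type*} [TopologicalSpace X] [Nonempty X] {f : X → X}
    (hf : Continuous f) (hwm : WeaklyMixing f) (U V : ι → Set X)
    (hU : ∀ i, IsOpen (U i)) (hV : ∀ i, IsOpen (V i))
    (hUne : ∀ i, (U i).Nonempty) (hVne : ∀ i, (V i).Nonempty) (s : Finset ι) :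
    ∃ A B : Set X, IsOpen A ∧ IsOpen B ∧ A.Nonempty ∧ B.Nonempty ∧
      ∀ m : ℕ, (A ∩ f^[m] ⁻¹' B).Nonempty → ∀ i ∈ s, (U i ∩ f^[m] ⁻¹' (V i)).Nonempty := by
  classical
  induction s using Finset.induction_on with
  | empty => exact ⟨Set.univ, Set.univ, isOpen_univ, isOpen_univ, Set.univ_nonempty,
      Set.univ_nonempty, by simp⟩
  | insert a s _ ih =>
    obtain ⟨A, B, hA, hB, hAn, hBn, h⟩ := ih
    obtain ⟨k, _, ⟨_, ⟨x, hx, rfl⟩, hx'⟩, ⟨_, ⟨y, hy, rfl⟩, hy'⟩⟩ :=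
      hwm A B (U a) (V a) hA hB (hU a) (hV a) hAn hBn (hUne a) (hVne a)
    refine ⟨A ∩ f^[k] ⁻¹' (U a), B ∩ f^[k] ⁻¹' (V a),
      hA.inter ((hU a).preimage (hf.iterate k)), hB.inter ((hV a).preimage (hf.iterate k)),
      ⟨x, hx, hx'⟩, ⟨y, hy, hy'⟩, ?_⟩
    rintro m ⟨z, ⟨hz1, hz2⟩, hz3, hz4⟩ i hi
    rcases Finset.mem_insert.1 hi with rfl | hi
    · refine ⟨f^[k] z, hz2, ?_⟩
      simp only [Set.mem_preimage] at hz4 ⊢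
      rwa [← Function.iterate_add_apply, add_comm, Function.iterate_add_apply]
    · exact h m ⟨z, hz1, hz3⟩ i hi

theorem consecutive_compact_refinement {X : Type*} [MetricSpace X] [Infinite X]
    [TopologicalSpace.SeparableSpace X] [LocallyCompactSpace X]
    (f : X → X) (hf : Continuous f) (hwm : WeaklyMixing f)
    (n : ℕ) (hn : 1 ≤ n) (K V : Fin n → Set X)
    (hK : ∀ j, IsCompact (K j)) (hKint : ∀ j, (interior (K j)).Nonempty)
    (hV : ∀ j, IsOpen (V j)) (hVne : ∀ j, (V j).Nonempty) :
    ∀ L : ℕ, 1 ≤ L → ∃ m : ℕ,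
      ∀ k : ℕ, m + 1 ≤ k → k ≤ m + L → ∀ j : Fin n,
        ∃ K' : Set X, IsCompact K' ∧ K' ⊆ K j ∧ (interior K').Nonempty ∧
          f^[k] '' K' ⊆ V j := by
  intro L _
  obtain ⟨A, B, hA, hB, hAn, hBn, h⟩ := wm_family hf hwm
    (ι := Fin n × ℕ) (fun p => interior (K p.1)) (fun p => f^[p.2] ⁻¹' (V p.1))
    (fun _ => isOpen_interior) (fun p => (hV p.1).preimage (hf.iterate p.2))
    (fun p => hKint p.1)
    (fun p => wm_preimage_nonempty hf hwm p.2 (V p.1) (hV p.1) (hVne p.1))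
    (Finset.univ ×ˢ Finset.range (L + 1))
  obtain ⟨m, _, ⟨_, ⟨x, hx, rfl⟩, hx'⟩, _⟩ := hwm A A B B hA hA hB hB hAn hAn hBn hBn
  refine ⟨m, fun k hk1 hk2 j => ?_⟩
  obtain ⟨i, rfl⟩ : ∃ i, k = i + m := ⟨k - m, by omega⟩
  obtain ⟨z, hz1, hz2⟩ := h m ⟨x, hx, hx'⟩ (j, i) (by simp; omega)
  have hO : IsOpen (interior (K j) ∩ f^[i + m] ⁻¹' (V j)) :=
    isOpen_interior.inter ((hV j).preimage (hf.iterate _))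
  obtain ⟨K', hK', hzK, hsub⟩ := exists_compact_subset (x := z) hO
    ⟨hz1, by simpa [Function.iterate_add_apply] using hz2⟩
  refine ⟨K', hK', fun y hy => interior_subset (hsub hy).1, ⟨z, hzK⟩, ?_⟩
  rintro _ ⟨y, hy, rfl⟩
  exact (hsub hy).2
end

section
/- Let X be an infinite separable locally compact metric space and let f : X → X be a continuous weakly mixing map. Suppose x₀ ∈ X is a point whose orbit O_f(x₀) = {fⁱ(x₀) : i ≥ 0} has compact closure. Let s ≥ 0 be an integer and let 𝒢 be a family of open subsets of X covering the closure of O_f(x₀). Then there exists a member G ∈ 𝒢 such that for all nonempty open sets W, W′ ⊆ X the set {n ≥ 1 : f^{n+s}(W) ∩ W′ ≠ ∅} ∩ {n ≥ 1 : fⁿ(x₀) ∈ G} is an infinite set of positive integers. -/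
/-- The orbit of `x₀` under `f`. -/
def Orbit {X : Type*} (f : X → X) (x₀ : X) : Set X :=
  Set.range fun i : ℕ => f^[i] x₀

theorem wm_exists_large {X : Type*} [TopologicalSpace X] {f : X → X} (hf : Continuous f)
    (hwm : WeaklyMixing f) (U V : Set X) (hU : IsOpen U) (hV : IsOpen V) (hUn : U.Nonempty)
    (hVn : V.Nonempty) (k : ℕ) : ∃ n, k < n ∧ ∃ x ∈ U, f^[n] x ∈ V := by
  induction k generalizing V with
  | zero =>
    obtain ⟨n, hn, ⟨_, ⟨x, hx, rfl⟩, hy⟩, -⟩ := hwm U U V V hU hU hV hV hUn hUn hVn hVn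
    exact ⟨n, hn, x, hx, hy⟩
  | succ k ih =>
    obtain ⟨n, hn, ⟨_, ⟨x, hx, rfl⟩, hy⟩, -⟩ := hwm U U V V hU hU hV hV hUn hUn hVn hVn
    obtain ⟨m, rfl⟩ : ∃ m, n = m + 1 := ⟨n - 1, by omega⟩
    rw [Function.iterate_succ_apply'] at hy
    obtain ⟨p, hp, z, hz, hz'⟩ := ih (f ⁻¹' V) (hV.preimage hf) ⟨_, hy⟩
    refine ⟨p + 1, by omega, z, hz, ?_⟩
    rw [Function.iterate_succ_apply']
    exact hz'

theorem wm_furstenberg {X ι : Type*} [TopologicalSpace X] [Nonempty X] {f : X → X}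
    (hf : Continuous f) (hwm : WeaklyMixing f) (W W' : ι → Set X)
    (h1 : ∀ i, IsOpen (W i)) (h2 : ∀ i, IsOpen (W' i)) (h3 : ∀ i, (W i).Nonempty)
    (h4 : ∀ i, (W' i).Nonempty) (t : Finset ι) :
    ∃ U V : Set X, IsOpen U ∧ IsOpen V ∧ U.Nonempty ∧ V.Nonempty ∧
      ∀ n, (∃ x ∈ U, f^[n] x ∈ V) → ∀ i ∈ t, ∃ x ∈ W i, f^[n] x ∈ W' i := by
  classical
  induction t using Finset.induction_on with
  | empty =>
    exact ⟨Set.univ, Set.univ, isOpen_univ, isOpen_univ, Set.univ_nonempty, Set.univ_nonempty,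
      by simp⟩
  | insert a t _ ih =>
    obtain ⟨U, V, hU, hV, hUn, hVn, h⟩ := ih
    obtain ⟨n, -, ⟨_, ⟨x, hx, rfl⟩, hx'⟩, ⟨_, ⟨y, hy, rfl⟩, hy'⟩⟩ :=
      hwm U V (W a) (W' a) hU hV (h1 a) (h2 a) hUn hVn (h3 a) (h4 a)
    refine ⟨U ∩ f^[n] ⁻¹' W a, V ∩ f^[n] ⁻¹' W' a, hU.inter ((h1 a).preimage (hf.iterate n)),
      hV.inter ((h2 a).preimage (hf.iterate n)), ⟨x, hx, hx'⟩, ⟨y, hy, hy'⟩, ?_⟩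
    rintro k ⟨z, ⟨hz1, hz2⟩, hz3, hz4⟩ i hi
    rcases Finset.mem_insert.1 hi with rfl | hi
    · refine ⟨f^[n] z, hz2, ?_⟩
      rw [← Function.iterate_add_apply, add_comm, Function.iterate_add_apply]
      exact hz4
    · exact h k ⟨z, hz1, hz3⟩ i hi

theorem good_cover_member_infinite_returns {X : Type*} [MetricSpace X] [Infinite X]
    [TopologicalSpace.SeparableSpace X] [LocallyCompactSpace X]
    (f : X → X) (hf : Continuous f) (hwm : WeaklyMixing f)
    (x₀ : X) (horb : IsCompact (closure (Orbit f x₀)))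
    (s : ℕ) (𝒢 : Set (Set X)) (h𝒢open : ∀ G ∈ 𝒢, IsOpen G)
    (h𝒢cover : closure (Orbit f x₀) ⊆ ⋃₀ 𝒢) :
    ∃ G ∈ 𝒢, ∀ W W' : Set X, IsOpen W → IsOpen W' → W.Nonempty → W'.Nonempty →
      ({n : ℕ | 1 ≤ n ∧ (f^[n + s] '' W ∩ W').Nonempty} ∩
        {n : ℕ | 1 ≤ n ∧ f^[n] x₀ ∈ G}).Infinite := by
  by_contra! hcon
  have hcon' : ∀ G : 𝒢, ∃ W W' : Set X, IsOpen W ∧ IsOpen W' ∧ W.Nonempty ∧ W'.Nonempty ∧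
      ({n : ℕ | 1 ≤ n ∧ (f^[n + s] '' W ∩ W').Nonempty} ∩
        {n : ℕ | 1 ≤ n ∧ f^[n] x₀ ∈ (G : Set X)}).Finite := by
    rintro ⟨G, hG⟩
    obtain ⟨W, W', a, b, c, d, e⟩ := hcon G hG
    exact ⟨W, W', a, b, c, d, e⟩
  choose W W' h1 h2 h3 h4 h5 using hcon'
  obtain ⟨t, ht⟩ := horb.elim_finite_subcover (fun G : 𝒢 => (G : Set X))
    (fun G => h𝒢open G G.2) (by rwa [← Set.sUnion_eq_iUnion])
  have : Nonempty X := ⟨x₀⟩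
  obtain ⟨U, V, hU, hV, hUn, hVn, h⟩ := wm_furstenberg hf hwm W W' h1 h2 h3 h4 t
  have hfin := t.finite_toSet.biUnion (fun G _ => h5 G)
  obtain ⟨B, hB⟩ := hfin.bddAbove
  obtain ⟨n, hn, hx⟩ := wm_exists_large hf hwm U V hU hV hUn hVn (B + s)
  obtain ⟨m, rfl⟩ : ∃ m, n = m + s := ⟨n - s, by omega⟩
  obtain ⟨G, hGt, hG⟩ := Set.mem_iUnion₂.1 (ht (subset_closure ⟨m, rfl⟩))
  obtain ⟨x, hxW, hxW'⟩ := h _ hx G hGt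
  have : m ≤ B := hB (Set.mem_iUnion₂.2 ⟨G, hGt, ⟨by omega, _, ⟨x, hxW, rfl⟩, hxW'⟩,
    by omega, hG⟩)
  omega
end

section
/- Let X be an infinite separable locally compact metric space and let f : X → X be a continuous weakly mixing map. Suppose x₀ ∈ X is a point whose orbit O_f(x₀) has compact closure. Let s ≥ 0 be an integer and let 𝒢 be a family of open subsets of X covering the closure of O_f(x₀). Then there exists a member G_s ∈ 𝒢 such that: for every n ≥ 1, all compact sets K₁, …, Kₙ ⊆ X with nonempty interiors, and all nonempty open sets V₁, …, Vₙ ⊆ X, there exist infinitely many positive integers k such that for each such k and each 1 ≤ j ≤ n there is a compact set K_{k,j} ⊆ K_j with nonempty interior satisfying f^{k+s}(K_{k,j}) ⊆ V_j and fᵏ(x₀) ∈ G_s. -/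
theorem wm_inter {X ι : Type*} [TopologicalSpace X] [Nonempty X] {f : X → X} (hf : Continuous f)
    (hwm : WeaklyMixing f) (U V : ι → Set X) (T : Finset ι)
    (hU : ∀ i ∈ T, IsOpen (U i) ∧ (U i).Nonempty) (hV : ∀ i ∈ T, IsOpen (V i) ∧ (V i).Nonempty) :
    ∃ A B : Set X, IsOpen A ∧ A.Nonempty ∧ IsOpen B ∧ B.Nonempty ∧
      ∀ m : ℕ, (∃ x ∈ A, f^[m] x ∈ B) → ∀ i ∈ T, ∃ x ∈ U i, f^[m] x ∈ V i := by
  classical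
  induction T using Finset.induction_on with
  | empty =>
    exact ⟨Set.univ, Set.univ, isOpen_univ, Set.univ_nonempty, isOpen_univ, Set.univ_nonempty,
      by simp⟩
  | insert a T ha ih =>
    obtain ⟨A, B, hA, hA', hB, hB', h⟩ := ih
      (fun i hi => hU i (Finset.mem_insert_of_mem hi)) (fun i hi => hV i (Finset.mem_insert_of_mem hi))
    obtain ⟨hUa, hUa'⟩ := hU a (Finset.mem_insert_self _ _)
    obtain ⟨hVa, hVa'⟩ := hV a (Finset.mem_insert_self _ _)
    obtain ⟨n, -, ⟨_, ⟨x, hx, rfl⟩, hx'⟩, ⟨_, ⟨y, hy, rfl⟩, hy'⟩⟩ :=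
      hwm A B (U a) (V a) hA hB hUa hVa hA' hB' hUa' hVa'
    refine ⟨A ∩ f^[n] ⁻¹' U a, B ∩ f^[n] ⁻¹' V a, hA.inter (hUa.preimage (hf.iterate n)),
      ⟨x, hx, hx'⟩, hB.inter (hVa.preimage (hf.iterate n)), ⟨y, hy, hy'⟩, ?_⟩
    rintro m ⟨z, ⟨hz1, hz2⟩, hz3, hz4⟩ i hi
    rcases Finset.mem_insert.1 hi with rfl | hi
    · refine ⟨f^[n] z, hz2, ?_⟩
      have hz5 : f^[n] (f^[m] z) ∈ V i := hz4
      rwa [← Function.iterate_add_apply, add_comm, Function.iterate_add_apply] at hz5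
    · exact h m ⟨z, hz1, hz3⟩ i hi

theorem wm_preimage {X : Type*} [TopologicalSpace X] {f : X → X} (hf : Continuous f)
    (hwm : WeaklyMixing f) (N : ℕ) :
    ∀ V : Set X, IsOpen V → V.Nonempty → (f^[N] ⁻¹' V).Nonempty := by
  induction N with
  | zero => intro V _ h; simpa using h
  | succ N ih =>
    intro V hV h
    have h1 : (f ⁻¹' V).Nonempty := by
      obtain ⟨n, hn, ⟨_, ⟨x, hx, rfl⟩, hx'⟩, -⟩ := hwm V V V V hV hV hV hV h h h h
      obtain ⟨k, rfl⟩ : ∃ k, n = k + 1 := ⟨n - 1, by omega⟩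
      rw [Function.iterate_succ_apply'] at hx'
      exact ⟨_, hx'⟩
    obtain ⟨x, hx⟩ := ih _ (hV.preimage hf) h1
    refine ⟨x, ?_⟩
    rw [Set.mem_preimage, Function.iterate_succ_apply']
    exact hx

theorem good_cover_member_compact_refinement {X : Type*} [MetricSpace X] [Infinite X]
    [TopologicalSpace.SeparableSpace X] [LocallyCompactSpace X]
    (f : X → X) (hf : Continuous f) (hwm : WeaklyMixing f)
    (x₀ : X) (horb : IsCompact (closure (Orbit f x₀)))
    (s : ℕ) (𝒢 : Set (Set X)) (h𝒢open : ∀ G ∈ 𝒢, IsOpen G)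
    (h𝒢cover : closure (Orbit f x₀) ⊆ ⋃₀ 𝒢) :
    ∃ G ∈ 𝒢, ∀ n : ℕ, 1 ≤ n → ∀ K V : Fin n → Set X,
      (∀ j, IsCompact (K j)) → (∀ j, (interior (K j)).Nonempty) →
      (∀ j, IsOpen (V j)) → (∀ j, (V j).Nonempty) →
      {k : ℕ | 1 ≤ k ∧ f^[k] x₀ ∈ G ∧ ∀ j : Fin n,
        ∃ K' : Set X, IsCompact K' ∧ K' ⊆ K j ∧ (interior K').Nonempty ∧
          f^[k + s] '' K' ⊆ V j}.Infinite := by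
  classical
  by_contra hcon
  have key : ∀ G : 𝒢, ∃ A B : Set X, ∃ M : ℕ, (IsOpen A ∧ A.Nonempty) ∧ (IsOpen B ∧ B.Nonempty) ∧
      ∀ k, M < k → f^[k] x₀ ∈ (G : Set X) → ¬ ∃ x ∈ A, f^[k + s] x ∈ B := by
    rintro ⟨G, hG⟩
    have h1 : ¬ _ := fun h => hcon ⟨G, hG, h⟩
    push Not at h1
    obtain ⟨n, hn, K, V, hK, hK', hV, hV', hfin⟩ := h1
    obtain ⟨M, hM⟩ := (show Set.Finite _ from by simpa using hfin).bddAbove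
    obtain ⟨A, B, hA, hA', hB, hB', h⟩ := wm_inter hf hwm (fun j => interior (K j)) V Finset.univ
      (fun j _ => ⟨isOpen_interior, hK' j⟩) (fun j _ => ⟨hV j, hV' j⟩)
    refine ⟨A, B, M, ⟨hA, hA'⟩, ⟨hB, hB'⟩, fun k hk hkG hx => ?_⟩
    refine absurd (hM (a := k) ⟨by omega, hkG, fun j => ?_⟩) (by omega)
    obtain ⟨x, hx1, hx2⟩ := h _ hx j (Finset.mem_univ j)
    obtain ⟨K', hc, hxK, hs⟩ := exists_compact_subset
      (isOpen_interior.inter ((hV j).preimage (hf.iterate (k + s)))) (show x ∈ _ from ⟨hx1, hx2⟩)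
    exact ⟨K', hc, fun y hy => interior_subset (hs hy).1, ⟨x, hxK⟩,
      fun y hy => (hs hy).2⟩
  choose A B M hA hB h using key
  obtain ⟨t, ht⟩ := horb.elim_finite_subcover (fun G : 𝒢 => (G : Set X))
    (fun G => h𝒢open G G.2) (by rwa [← Set.sUnion_eq_iUnion])
  obtain ⟨C, D, hC, hC', hD, hD', hCD⟩ := wm_inter hf hwm A B t (fun i _ => hA i) (fun i _ => hB i)
  obtain ⟨N, hN⟩ : ∃ N, ∀ i ∈ t, M i < N :=
    ⟨t.sup M + 1, fun i hi => Nat.lt_succ_of_le (Finset.le_sup hi)⟩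
  have hP := wm_preimage hf hwm (N + s) D hD hD'
  have hPo : IsOpen (f^[N + s] ⁻¹' D) := hD.preimage (hf.iterate _)
  obtain ⟨n, -, ⟨_, ⟨x, hx, rfl⟩, hx'⟩, -⟩ := hwm C C _ _ hC hC hPo hPo hC' hC' hP hP
  rw [Set.mem_preimage, ← Function.iterate_add_apply] at hx'
  have hmem := ht (subset_closure (show f^[N + n] x₀ ∈ Orbit f x₀ from ⟨N + n, rfl⟩))
  obtain ⟨G, hGt, hG⟩ := Set.mem_iUnion₂.1 hmem
  refine h G (N + n) (by have := hN G hGt; omega) hG (hCD _ ⟨x, hx, ?_⟩ G hGt)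
  rwa [show N + n + s = N + s + n by ring]
end

section
/- Let X be an infinite separable locally compact metric space and let f : X → X be a continuous weakly mixing map. Then there exist countably infinitely many pairwise disjoint Cantor sets S⁽¹⁾, S⁽²⁾, S⁽³⁾, … in X, each consisting of totally transitive points of f, whose union S = ⋃_{j≥1} S⁽ʲ⁾ is dense in X and has the property: for every n ≥ 1 and all pairwise distinct points a₁, …, aₙ ∈ S, the point (a₁, …, aₙ) is a totally transitive point of the n-fold product map f × f × … × f : Xⁿ → Xⁿ, i.e., for every k ≥ 1 the orbit {(f × … × f)^{km}(a₁, …, aₙ) : m ≥ 0} is dense in Xⁿ. -/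
/-- A Cantor set: a nonempty compact, perfect, totally disconnected subset. -/
def IsCantorSet {X : Type*} [TopologicalSpace X] (C : Set X) : Prop :=
  C.Nonempty ∧ IsCompact C ∧ Perfect C ∧ IsTotallyDisconnected C

/-- `x` is a totally transitive point of `g`: for every `k ≥ 1` the orbit of `x`
under `g^k` is dense. -/
def TotallyTransitivePoint {Y : Type*} [TopologicalSpace Y] (g : Y → Y) (x : Y) : Prop :=
  ∀ k : ℕ, 1 ≤ k → Dense (Set.range fun m : ℕ => g^[k * m] x)

open Set Filter Topology TopologicalSpace

theorem aux_polish (X : Type*) [MetricSpace X] [SeparableSpace X] [LocallyCompactSpace X] :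
    PolishSpace X := by
  have hi : IsDenseEmbedding ((↑) : X → UniformSpace.Completion X) :=
    UniformSpace.Completion.isDenseEmbedding_coe
  have hso : IsOpen (range ((↑) : X → UniformSpace.Completion X)) := by
    rw [isOpen_iff_mem_nhds]
    rintro _ ⟨x, rfl⟩
    obtain ⟨K, hK, hKx⟩ := exists_compact_mem_nhds x
    rw [hi.isInducing.nhds_eq_comap, mem_comap] at hKx
    obtain ⟨O', hO', hOK⟩ := hKx
    obtain ⟨O, hOO, hO, hxO⟩ := mem_nhds_iff.1 hO'
    refine mem_of_superset (hO.mem_nhds hxO) ?_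
    have h1 := hi.dense.open_subset_closure_inter hO
    refine h1.trans ?_
    have hc : IsClosed (((↑) : X → UniformSpace.Completion X) '' K) :=
      (hK.image hi.continuous).isClosed
    refine (closure_minimal ?_ hc).trans (image_subset_range _ _)
    rintro _ ⟨hy, z, rfl⟩
    exact ⟨z, hOK (hOO hy), rfl⟩
  have : SeparableSpace (UniformSpace.Completion X) := inferInstance
  have : PolishSpace (UniformSpace.Completion X) := inferInstance
  have := hso.polishSpace
  exact (hi.isEmbedding.toHomeomorph).isClosedEmbedding.polishSpace

/-- Hitting times. -/
def HitT {X : Type*} (f : X → X) (U V : Set X) (m : ℕ) : Prop := ∃ x ∈ U, f^[m] x ∈ V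

theorem aux_two {X : Type*} [TopologicalSpace X] {f : X → X} (hf : Continuous f)
    (h : WeaklyMixing f) {U₁ V₁ U₂ V₂ : Set X} (a : IsOpen U₁) (b : IsOpen V₁) (c : IsOpen U₂)
    (d : IsOpen V₂) (a' : U₁.Nonempty) (b' : V₁.Nonempty) (c' : U₂.Nonempty) (d' : V₂.Nonempty) :
    ∃ U V : Set X, IsOpen U ∧ IsOpen V ∧ U.Nonempty ∧ V.Nonempty ∧
      ∀ m, HitT f U V m → HitT f U₁ V₁ m ∧ HitT f U₂ V₂ m := by
  obtain ⟨n, -, ⟨_, ⟨x, hx, rfl⟩, hx2⟩, ⟨_, ⟨y, hy, rfl⟩, hy2⟩⟩ := h U₁ V₁ U₂ V₂ a b c d a' b' c' d'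
  refine ⟨U₁ ∩ f^[n] ⁻¹' U₂, V₁ ∩ f^[n] ⁻¹' V₂, a.inter (c.preimage (hf.iterate n)),
    b.inter (d.preimage (hf.iterate n)), ⟨x, hx, hx2⟩, ⟨y, hy, hy2⟩, ?_⟩
  rintro m ⟨z, ⟨hz1, hz2⟩, hz3, hz4⟩
  refine ⟨⟨z, hz1, hz3⟩, f^[n] z, hz2, ?_⟩
  rw [← Function.iterate_add_apply, add_comm, Function.iterate_add_apply]
  exact hz4

theorem aux_fin {X : Type*} [TopologicalSpace X] [Nonempty X] {f : X → X} (hf : Continuous f)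
    (h : WeaklyMixing f) {ι : Type*} (s : Finset ι) (U V : ι → Set X)
    (hU : ∀ i, IsOpen (U i)) (hV : ∀ i, IsOpen (V i)) (hU' : ∀ i, (U i).Nonempty)
    (hV' : ∀ i, (V i).Nonempty) :
    ∃ A B : Set X, IsOpen A ∧ IsOpen B ∧ A.Nonempty ∧ B.Nonempty ∧
      ∀ m, HitT f A B m → ∀ i ∈ s, HitT f (U i) (V i) m := by
  classical
  induction s using Finset.induction_on with
  | empty => exact ⟨univ, univ, isOpen_univ, isOpen_univ, univ_nonempty, univ_nonempty, by simp⟩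
  | insert i s hi ih =>
    obtain ⟨A, B, hA, hB, hA', hB', hAB⟩ := ih
    obtain ⟨A2, B2, k1, k2, k3, k4, k5⟩ :=
      aux_two hf h (hU i) (hV i) hA hB (hU' i) (hV' i) hA' hB'
    refine ⟨A2, B2, k1, k2, k3, k4, fun m hm j hj => ?_⟩
    rcases Finset.mem_insert.1 hj with rfl | hj
    · exact (k5 m hm).1
    · exact hAB m (k5 m hm).2 j hj

theorem aux_pre {X : Type*} [TopologicalSpace X] [Nonempty X] {f : X → X} (hf : Continuous f)
    (h : WeaklyMixing f) {V : Set X} (hV : IsOpen V) (hV' : V.Nonempty) (i : ℕ) :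
    (f^[i] ⁻¹' V).Nonempty := by
  induction i with
  | zero => simpa using hV'
  | succ i ih =>
    obtain ⟨n, hn, ⟨_, ⟨x, -, rfl⟩, hx2⟩, -⟩ := h univ univ _ _ isOpen_univ isOpen_univ
      (hV.preimage (hf.iterate i)) (hV.preimage (hf.iterate i)) univ_nonempty univ_nonempty ih ih
    obtain ⟨n, rfl⟩ := Nat.exists_eq_add_of_le hn
    refine ⟨f^[n] x, ?_⟩
    simp only [mem_preimage, ← Function.iterate_add_apply] at hx2 ⊢
    convert hx2 using 2
    ring_nf

theorem aux_hit {X : Type*} [TopologicalSpace X] [Nonempty X] {f : X → X} (hf : Continuous f)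
    (h : WeaklyMixing f) {ι : Type*} [Finite ι] (U V : ι → Set X)
    (hU : ∀ i, IsOpen (U i)) (hV : ∀ i, IsOpen (V i)) (hU' : ∀ i, (U i).Nonempty)
    (hV' : ∀ i, (V i).Nonempty) (k : ℕ) (hk : 1 ≤ k) :
    ∃ m, ∀ i, HitT f (U i) (V i) (k * m) := by
  cases nonempty_fintype ι
  obtain ⟨A, B, hA, hB, hA', hB', hAB⟩ := aux_fin hf h Finset.univ U V hU hV hU' hV'
  obtain ⟨C, D, hC, hD, hC', hD', hCD⟩ := aux_fin hf h (Finset.range k) (fun _ => A)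
    (fun i => f^[i] ⁻¹' B) (fun _ => hA) (fun i => hB.preimage (hf.iterate i)) (fun _ => hA')
    (fun i => aux_pre hf h hB hB' i)
  obtain ⟨n, -, ⟨_, ⟨x, hx, rfl⟩, hx2⟩, -⟩ := h C C D D hC hC hD hD hC' hC' hD' hD'
  have key : ∀ i < k, HitT f A B (i + n) := by
    intro i hi
    obtain ⟨y, hy, hy2⟩ := hCD n ⟨x, hx, hx2⟩ i (Finset.mem_range.2 hi)
    refine ⟨y, hy, ?_⟩
    rwa [Function.iterate_add_apply]
  have : ∃ i < k, ∃ m, i + n = k * m := by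
    refine ⟨(k - n % k) % k, Nat.mod_lt _ hk, ?_⟩
    have hlt : n % k < k := Nat.mod_lt _ hk
    have : k ∣ (k - n % k) % k + n := by
      rw [Nat.dvd_iff_mod_eq_zero, Nat.add_mod, Nat.mod_mod, ← Nat.add_mod, ← Nat.add_mod_mod,
        Nat.sub_add_cancel hlt.le, Nat.mod_self]
    exact this
  obtain ⟨i, hi, m, hm⟩ := this
  exact ⟨m, fun j => hAB _ (hm ▸ key i hi) j (Finset.mem_univ j)⟩

/-- Truncation of a binary sequence. -/
def truncB (N : ℕ) (y : ℕ → Bool) : Fin N → Bool := fun i => y i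

theorem truncB_continuous (N : ℕ) : Continuous (truncB N) := by
  unfold truncB; fun_prop

/-- The generic condition. -/
def goodG {X : Type*} [TopologicalSpace X] (f : X → X) (N k : ℕ)
    (V : Fin N × (Fin N → Bool) → Set X) : Set (ℕ → C(ℕ → Bool, X)) :=
  {φ | ∃ m, ∀ j : Fin N, ∀ y, f^[k * m] (φ j y) ∈ V (j, truncB N y)}

theorem goodG_open {X : Type*} [TopologicalSpace X] {f : X → X} (hf : Continuous f) (N k : ℕ)
    (V : Fin N × (Fin N → Bool) → Set X) (hV : ∀ s, IsOpen (V s)) : IsOpen (goodG f N k V) := by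
  have : goodG f N k V = ⋃ m : ℕ, ⋂ j : Fin N, ⋂ s : Fin N → Bool,
      (fun φ : ℕ → C(ℕ → Bool, X) => φ j) ⁻¹'
        {g | MapsTo g (truncB N ⁻¹' {s}) (f^[k * m] ⁻¹' V (j, s))} := by
    ext φ
    simp only [goodG, mem_ofPred_eq, mem_iUnion, mem_iInter, mem_preimage]
    refine exists_congr fun m => forall_congr' fun j => ?_
    constructor
    · rintro h s y rfl
      exact h y
    · intro h y
      exact h _ rfl
  rw [this]
  refine isOpen_iUnion fun m => isOpen_iInter_of_finite fun j => isOpen_iInter_of_finite fun s => ?_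
  refine IsOpen.preimage (continuous_apply _) ?_
  exact ContinuousMap.isOpen_setOfPred_mapsTo
    ((isClosed_singleton.preimage (truncB_continuous N)).isCompact)
    ((hV _).preimage (hf.iterate _))

theorem aux_closure {Z : ℕ → Type*} [∀ i, PseudoMetricSpace (Z i)] {G : Set (∀ i, Z i)}
    (h : ∀ φ : ∀ i, Z i, ∀ I : Finset ℕ, ∀ δ : ℕ → ℝ, (∀ i, 0 < δ i) →
      ∃ ψ ∈ G, ∀ i ∈ I, dist (ψ i) (φ i) < δ i) :
    Dense G := by
  rw [dense_iff_inter_open]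
  rintro O hO ⟨φ, hφ⟩
  obtain ⟨I, u, hu, hsub⟩ := isOpen_pi_iff.1 hO φ hφ
  have : ∀ i, ∃ δ > 0, i ∈ I → Metric.ball (φ i) δ ⊆ u i := by
    intro i
    by_cases hi : i ∈ I
    · obtain ⟨δ, h1, h2⟩ := Metric.isOpen_iff.1 (hu i hi).1 _ (hu i hi).2
      exact ⟨δ, h1, fun _ => h2⟩
    · exact ⟨1, one_pos, fun h => absurd h hi⟩
  choose δ h1 h2 using this
  obtain ⟨ψ, hψ, hd⟩ := h φ I δ h1
  exact ⟨ψ, hsub fun i hi => h2 i hi (hd i hi), hψ⟩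

theorem goodG_dense {X : Type*} [MetricSpace X] [Nonempty X] {f : X → X} (hf : Continuous f)
    (hw : WeaklyMixing f) (N k : ℕ) (hk : 1 ≤ k)
    (V : Fin N × (Fin N → Bool) → Set X) (hV : ∀ s, IsOpen (V s)) (hV' : ∀ s, (V s).Nonempty) :
    Dense (goodG f N k V) := by
  refine aux_closure fun φ I δ hδ => ?_
  have : ∀ j, ∃ (n : ℕ) (g : (ℕ → Bool) → Fin n) (h : Fin n → X), Continuous g ∧
      ∀ x, (φ j x, h (g x)) ∈ {p : X × X | dist p.1 p.2 < δ j / 3} := by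
    intro j
    refine ContinuousMap.exists_finite_approximation_of_mem_nhds_diagonal (φ j) ?_
    rw [mem_nhdsSet_iff_forall]
    rintro ⟨x, y⟩ (rfl : x = y)
    refine IsOpen.mem_nhds (isOpen_lt (by fun_prop) (by fun_prop)) ?_
    simp only [mem_ofPred_eq, dist_self]
    have := hδ j
    positivity
  choose n g h hg hgh using this
  obtain ⟨m, hm⟩ := aux_hit hf hw (ι := Σ j : Fin N, Fin (n j) × (Fin N → Bool))
    (fun t => Metric.ball (h t.1 t.2.1) (δ t.1 / 3)) (fun t => V (t.1, t.2.2))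
    (fun t => Metric.isOpen_ball) (fun t => hV _)
    (fun t => Metric.nonempty_ball.2 (by have := hδ t.1; positivity)) (fun t => hV' _) k hk
  choose p hp hpV using hm
  let ψ : ℕ → C(ℕ → Bool, X) := fun j =>
    if hj : j < N then
      ⟨fun y => (fun q : Fin (n j) × (Fin N → Bool) => p ⟨⟨j, hj⟩, q⟩) (g j y, truncB N y),
        (continuous_of_discreteTopology (f :=
          fun q : Fin (n j) × (Fin N → Bool) => p ⟨⟨j, hj⟩, q⟩)).comp ((hg j).prodMk (truncB_continuous N))⟩
    else φ j
  refine ⟨ψ, ⟨m, fun j y => ?_⟩, fun j _ => ?_⟩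
  · have : ψ j y = p ⟨j, (g j y, truncB N y)⟩ := by
      simp only [ψ, dif_pos j.2]; rfl
    rw [this]
    exact hpV ⟨j, (g j y, truncB N y)⟩
  · by_cases hj : j < N
    · rw [ContinuousMap.dist_lt_iff (hδ j)]
      intro y
      have h0 : ψ j y = p ⟨⟨j, hj⟩, (g j y, truncB N y)⟩ := by
        simp only [ψ, dif_pos hj]; rfl
      have h1 := hp ⟨⟨j, hj⟩, (g j y, truncB N y)⟩
      rw [Metric.mem_ball] at h1
      have h2 := hgh j y
      simp only [mem_ofPred_eq] at h2
      rw [h0]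
      have h3 := dist_triangle_right (p ⟨⟨j, hj⟩, (g j y, truncB N y)⟩) (φ j y) (h j (g j y))
      have := hδ j
      linarith
    · simp [ψ, hj, hδ j]

/-- The condition giving density of the union. -/
theorem hitW {X : Type*} [MetricSpace X] (W : Set X) (hW : IsOpen W) (hW' : W.Nonempty) :
    IsOpen {φ : ℕ → C(ℕ → Bool, X) | ∃ j y, φ j y ∈ W} ∧
    Dense {φ : ℕ → C(ℕ → Bool, X) | ∃ j y, φ j y ∈ W} := by
  constructor
  · simp only [ofPred_exists]
    refine isOpen_iUnion fun j => isOpen_iUnion fun y => ?_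
    exact hW.preimage ((continuous_eval_const y).comp (continuous_apply j))
  · refine aux_closure fun φ I δ hδ => ?_
    obtain ⟨j, hj⟩ := Infinite.exists_notMem_finset I
    obtain ⟨w, hw⟩ := hW'
    classical
    refine ⟨Function.update φ j (ContinuousMap.const _ w), ⟨j, fun _ => false, by simpa using hw⟩,
      fun i hi => ?_⟩
    have : i ≠ j := fun h => hj (h ▸ hi)
    simp [Function.update_of_ne this, hδ i]

theorem aux_generic {X : Type*} [TopologicalSpace X] [PolishSpace X] [Nonempty X] {f : X → X}
    (hf : Continuous f) (hw : WeaklyMixing f) :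
    ∃ φ : ℕ → C(ℕ → Bool, X), Dense (⋃ j, range (φ j)) ∧
      ∀ {ι : Type} [Finite ι] (a : ι → ℕ × (ℕ → Bool)) (W : ι → Set X) (k : ℕ), 1 ≤ k →
        Function.Injective a → (∀ i, IsOpen (W i)) → (∀ i, (W i).Nonempty) →
        ∃ m, ∀ i, f^[k * m] (φ (a i).1 (a i).2) ∈ W i := by
  let := upgradeIsCompletelyMetrizable X
  have hcb := (countable_countableBasis X).to_subtype
  have hB := isBasis_countableBasis X
  have hne : ∀ W : countableBasis X, (W : Set X).Nonempty := fun W =>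
    nonempty_of_mem_countableBasis W.2
  have hop : ∀ W : countableBasis X, IsOpen (W : Set X) := fun W => hB.isOpen W.2
  have d1 : Dense (⋂ t : (Σ N : ℕ, ℕ × (Fin N × (Fin N → Bool) → countableBasis X)),
      goodG f t.1 (t.2.1 + 1) (fun s => (t.2.2 s : Set X))) :=
    dense_iInter_of_isOpen (fun t => goodG_open hf _ _ _ fun s => hop _)
      (fun t => goodG_dense hf hw _ _ (by omega) _ (fun s => hop _) (fun s => hne _))
  have d2 : Dense (⋂ W : countableBasis X, {φ : ℕ → C(ℕ → Bool, X) | ∃ j y, φ j y ∈ (W : Set X)}) :=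
    dense_iInter_of_isOpen (fun W => (hitW _ (hop W) (hne W)).1)
      (fun W => (hitW _ (hop W) (hne W)).2)
  have g1 : IsGδ (⋂ t : (Σ N : ℕ, ℕ × (Fin N × (Fin N → Bool) → countableBasis X)),
      goodG f t.1 (t.2.1 + 1) (fun s => (t.2.2 s : Set X))) :=
    IsGδ.iInter_of_isOpen fun t => goodG_open hf _ _ _ fun s => hop _
  have g2 : IsGδ (⋂ W : countableBasis X,
      {φ : ℕ → C(ℕ → Bool, X) | ∃ j y, φ j y ∈ (W : Set X)}) :=
    IsGδ.iInter_of_isOpen fun W => (hitW _ (hop W) (hne W)).1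
  have : Nonempty (ℕ → C(ℕ → Bool, X)) :=
    ⟨fun _ => ContinuousMap.const _ (Classical.arbitrary X)⟩
  obtain ⟨φ, h1, h2⟩ := (d1.inter_of_Gδ g1 g2 d2).nonempty
  rw [mem_iInter] at h1 h2
  refine ⟨φ, ?_, ?_⟩
  · rw [hB.dense_iff]
    intro o ho _
    obtain ⟨j, y, hy⟩ := h2 ⟨o, ho⟩
    exact ⟨_, hy, mem_iUnion.2 ⟨j, y, rfl⟩⟩
  · intro ι _ a W k hk ha hW hW'
    cases nonempty_fintype ι
    classical
    have hsub : ∀ i, ∃ B : countableBasis X, (B : Set X) ⊆ W i := by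
      intro i
      obtain ⟨x, hx⟩ := hW' i
      obtain ⟨B, hB1, -, hB2⟩ := hB.exists_subset_of_mem_open hx (hW i)
      exact ⟨⟨B, hB1⟩, hB2⟩
    choose B hBW using hsub
    -- a level separating the points
    have hsep : ∀ i i' : ι, ∃ N, ∀ M, N ≤ M → i ≠ i' → (a i).1 = (a i').1 →
        truncB M (a i).2 ≠ truncB M (a i').2 := by
      intro i i'
      by_cases h : (a i).2 = (a i').2
      · refine ⟨0, fun M _ hne h1 => absurd (ha (Prod.ext h1 h)) hne⟩
      · obtain ⟨q, hq⟩ := Function.ne_iff.1 h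
        refine ⟨q + 1, fun M hM _ _ he => hq ?_⟩
        exact congrFun he ⟨q, by omega⟩
    choose L hL using hsep
    let N := (∑ i, ∑ i', L i i') + ∑ i, ((a i).1 + 1)
    have hN1 : ∀ i i', L i i' ≤ N := by
      intro i i'
      have e1 : L i i' ≤ ∑ i', L i i' :=
        Finset.single_le_sum (f := fun i' => L i i') (fun _ _ => Nat.zero_le _) (Finset.mem_univ i')
      have e2 : ∑ i', L i i' ≤ ∑ i, ∑ i', L i i' :=
        Finset.single_le_sum (f := fun i => ∑ i', L i i') (fun _ _ => Nat.zero_le _)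
          (Finset.mem_univ i)
      exact (e1.trans e2).trans (Nat.le_add_right _ _)
    have hN2 : ∀ i, (a i).1 < N := by
      intro i
      have e1 : (a i).1 + 1 ≤ ∑ i, ((a i).1 + 1) :=
        Finset.single_le_sum (f := fun i => (a i).1 + 1) (fun _ _ => Nat.zero_le _)
          (Finset.mem_univ i)
      exact lt_of_lt_of_le (Nat.lt_succ_self _) (e1.trans (Nat.le_add_left _ _))
    let c : ι → Fin N × (Fin N → Bool) := fun i => (⟨(a i).1, hN2 i⟩, truncB N (a i).2)
    have hc : Function.Injective c := by
      intro i i' h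
      by_contra hne
      have e1 : (a i).1 = (a i').1 := congrArg (fun z => (z.1 : ℕ)) h
      exact hL i i' N (hN1 i i') hne e1 (congrArg Prod.snd h)
    obtain ⟨x0⟩ := ‹Nonempty X›
    obtain ⟨B0, hB0, -⟩ := hB.exists_subset_of_mem_open (mem_univ x0) isOpen_univ
    obtain ⟨m, hm⟩ := h1 ⟨N, k - 1, Function.extend c B (fun _ => ⟨B0, hB0⟩)⟩
    refine ⟨m, fun i => hBW i ?_⟩
    have := hm ⟨(a i).1, hN2 i⟩ (a i).2
    have e : Function.extend c B (fun _ => ⟨B0, hB0⟩) (⟨(a i).1, hN2 i⟩, truncB N (a i).2) = B i :=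
      hc.extend_apply _ _ i
    simp only [e, Nat.sub_add_cancel hk] at this
    exact this

theorem aux_perfect (y : ℕ → Bool) : AccPt y (𝓟 univ) := by
  rw [accPt_iff_nhds]
  intro U hU
  obtain ⟨O, hOU, hO, hy⟩ := mem_nhds_iff.1 hU
  obtain ⟨I, u, hu, hsub⟩ := isOpen_pi_iff.1 hO y hy
  obtain ⟨j, hj⟩ := Infinite.exists_notMem_finset I
  refine ⟨Function.update y j (!(y j)), ⟨hOU (hsub fun i hi => ?_), mem_univ _⟩, fun h => ?_⟩
  · have : i ≠ j := fun h => hj (h ▸ hi)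
    rw [Function.update_of_ne this]
    exact (hu i hi).2
  · have := congrFun h j
    simp at this

theorem aux_iter {X : Type*} (f : X → X) (n m : ℕ) (a : Fin n → X) (i : Fin n) :
    (prodMap n f)^[m] a i = f^[m] (a i) := by
  induction m generalizing a with
  | zero => rfl
  | succ m ih => rw [Function.iterate_succ_apply, Function.iterate_succ_apply, ih]; rfl

theorem cantor_sets_of_totally_transitive_points {X : Type*} [MetricSpace X] [Infinite X]
    [TopologicalSpace.SeparableSpace X] [LocallyCompactSpace X]
    (f : X → X) (hf : Continuous f) (hwm : WeaklyMixing f) :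
    ∃ S : ℕ → Set X,
      (∀ i j, i ≠ j → Disjoint (S i) (S j)) ∧
      (∀ j, IsCantorSet (S j)) ∧
      (∀ j, ∀ x ∈ S j, TotallyTransitivePoint f x) ∧
      Dense (⋃ j, S j) ∧
      (∀ n : ℕ, 1 ≤ n → ∀ a : Fin n → X, (∀ i, a i ∈ ⋃ j, S j) →
        Function.Injective a → TotallyTransitivePoint (prodMap n f) a) := by
  have := aux_polish X
  obtain ⟨φ, hd, hφ⟩ := aux_generic hf hwm
  have hinj : ∀ p q : ℕ × (ℕ → Bool), φ p.1 p.2 = φ q.1 q.2 → p = q := by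
    intro p q h
    by_contra hne
    obtain ⟨x, y, hxy⟩ := exists_pair_ne X
    obtain ⟨A, B, hA, hB, hxA, hyB, hAB⟩ := t2_separation hxy
    obtain ⟨m, hm⟩ := hφ (fun b : Bool => if b then p else q) (fun b => if b then A else B) 1 le_rfl
      (by
        intro b b' hb
        cases b <;> cases b' <;> simp_all)
      (by intro b; cases b <;> simpa) (by
        intro b
        cases b
        · exact ⟨y, by simpa using hyB⟩
        · exact ⟨x, by simpa using hxA⟩)
    have h1 := hm true
    have h2 := hm false
    simp only [if_true, Bool.false_eq_true, if_false] at h1 h2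
    rw [h] at h1
    exact hAB.le_bot ⟨h1, h2⟩
  have hinj' : ∀ j, Function.Injective (φ j) := fun j y z h =>
    congrArg Prod.snd (hinj (j, y) (j, z) h)
  refine ⟨fun j => range (φ j), ?_, ?_, ?_, hd, ?_⟩
  · intro i j hij
    rw [Set.disjoint_left]
    rintro _ ⟨y, rfl⟩ ⟨z, hz⟩
    exact hij (congrArg Prod.fst (hinj (i, y) (j, z) hz.symm))
  · intro j
    have hc : IsCompact (range (φ j)) := isCompact_range (φ j).continuous
    refine ⟨range_nonempty _, hc, ⟨hc.isClosed, ?_⟩, ?_⟩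
    · rintro _ ⟨y, rfl⟩
      have := (aux_perfect y).map (φ j).continuous.continuousAt (hinj' j)
      rwa [map_principal, image_univ] at this
    · have he : IsEmbedding (φ j) :=
        ((φ j).continuous.isClosedEmbedding (hinj' j)).isEmbedding
      change IsTotallyDisconnected (range (φ j))
      rw [← image_univ]
      exact he.isTotallyDisconnected_image.2 (isTotallyDisconnected_of_totallyDisconnectedSpace _)
  · rintro j _ ⟨y, rfl⟩ k hk
    rw [dense_iff_inter_open]
    intro O hO hO'
    obtain ⟨m, hm⟩ := hφ (fun _ : Unit => (j, y)) (fun _ => O) k hk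
      (Function.injective_of_subsingleton _) (fun _ => hO) (fun _ => hO')
    exact ⟨_, hm (), m, rfl⟩
  · intro n _ a ha hainj k hk
    have : ∀ i, ∃ p : ℕ × (ℕ → Bool), φ p.1 p.2 = a i := by
      intro i
      obtain ⟨j, y, h⟩ := mem_iUnion.1 (ha i)
      exact ⟨(j, y), h⟩
    choose p hp using this
    rw [dense_iff_inter_open]
    rintro O hO ⟨z, hz⟩
    obtain ⟨I, u, hu, hsub⟩ := isOpen_pi_iff.1 hO z hz
    classical
    obtain ⟨m, hm⟩ := hφ p (fun i => if i ∈ I then u i else univ) k hk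
      (fun i i' h => hainj (by rw [← hp i, ← hp i', h]))
      (by
        intro i
        by_cases hi : i ∈ I
        · simpa [hi] using (hu i hi).1
        · simp [hi])
      (by
        intro i
        by_cases hi : i ∈ I
        · exact ⟨z i, by simpa [hi] using (hu i hi).2⟩
        · exact ⟨z i, by simp [hi]⟩)
    refine ⟨_, hsub fun i hi => ?_, m, rfl⟩
    have := hm i
    rw [if_pos (by simpa using hi), hp i] at this
    simpa only [aux_iter] using this
end

section
/- Let X be an infinite separable locally compact metric space without isolated points and let f : X → X be a continuous topologically mixing map. Then δ = inf_{n≥1} sup_{x∈X} ρ(fⁿ(x), x) > 0; in particular, f is not uniformly rigid. -/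
open Filter ENNReal

/-- `f` is (topologically) mixing. -/
def TopMixing {X : Type*} [TopologicalSpace X] (f : X → X) : Prop :=
  ∀ U V : Set X, IsOpen U → IsOpen V → U.Nonempty → V.Nonempty →
    ∃ N : ℕ, ∀ n : ℕ, N ≤ n → (f^[n] '' U ∩ V).Nonempty

theorem not_uniformly_rigid_of_mixing {X : Type*} [MetricSpace X] [Infinite X]
    [TopologicalSpace.SeparableSpace X] [LocallyCompactSpace X]
    (hiso : ∀ x : X, ¬ IsOpen ({x} : Set X))
    (f : X → X) (hf : Continuous f) (hmix : TopMixing f) :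
    0 < ⨅ (n : ℕ) (_ : 1 ≤ n), ⨆ x : X, edist (f^[n] x) x := by
  obtain ⟨a, b, hab⟩ := exists_pair_ne X
  have hd : 0 < dist a b := dist_pos.2 hab
  set r : ℝ := dist a b / 3 with hr
  have hr0 : 0 < r := by positivity
  obtain ⟨N, hN⟩ := hmix (Metric.ball a r) (Metric.ball b r) Metric.isOpen_ball
    Metric.isOpen_ball ⟨a, Metric.mem_ball_self hr0⟩ ⟨b, Metric.mem_ball_self hr0⟩
  have hpos : 0 < ENNReal.ofReal r / ((N + 1 : ℕ) : ℝ≥0∞) :=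
    ENNReal.div_pos (ENNReal.ofReal_pos.2 hr0).ne' (ENNReal.natCast_ne_top _)
  refine lt_of_lt_of_le hpos (le_iInf₂ fun n hn => ?_)
  set S : ℝ≥0∞ := ⨆ x : X, edist (f^[n] x) x with hS
  have key : ∀ (k : ℕ) (x : X), edist ((f^[n])^[k] x) x ≤ (k : ℝ≥0∞) * S := by
    intro k
    induction k with
    | zero => intro x; simp
    | succ k ih =>
      intro x
      rw [Function.iterate_succ_apply]
      calc _ ≤ edist ((f^[n])^[k] (f^[n] x)) (f^[n] x) + edist (f^[n] x) x :=
            edist_triangle _ _ _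
        _ ≤ (k : ℝ≥0∞) * S + S :=
            add_le_add (ih _) (le_iSup (fun x : X => edist (f^[n] x) x) x)
        _ = _ := by push_cast; ring
  obtain ⟨_, ⟨x, hx, rfl⟩, hy⟩ := hN (n * (N + 1)) (by nlinarith)
  have h1 := key (N + 1) x
  rw [← Function.iterate_mul] at h1
  rw [Metric.mem_ball] at hx hy
  have h2 : r ≤ dist (f^[n * (N + 1)] x) x := by
    have := dist_triangle4 a x (f^[n * (N + 1)] x) b
    rw [dist_comm a x, dist_comm x (f^[n * (N + 1)] x)] at this
    linarith
  apply ENNReal.div_le_of_le_mul'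
  refine le_trans ?_ h1
  rw [edist_dist]
  exact ENNReal.ofReal_le_ofReal h2
end
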